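/- For every integer d ≥ 2, one has (j_{d/2-1, 1})² ≤ (d/(d+3)) · (j_{d/2, 1})², where j_{ν,1} denotes the smallest positive zero of the Bessel function J_ν. Equivalently, (j_{d/2-1,1}/j_{d/2,1})² ≤ 1 − 3/(d+3). -/

import Mathlib

/-!
Write `J_ν x = (x / 2) ^ ν * E_ν (x ^ 2 / 4)` with `E_ν` entire, so that `E_ν' = -E_{ν+1}`. It is
enough to show `E_ν (b - h) ≤ 0`, where `b` is the first positive zero of `E_{ν+1}` and
`h = 3 b / (2 ν + 5)`, because `E_ν 0 > 0`. Every `E_{ν+k} b` with `k ≥ 2` is positive, so the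
Taylor coefficients of `E_ν (b - h)` in `h` from the second one on are positive, and Turán's
inequality bounds the terms of order at least four by a geometric series. The three-term recurrence
expresses the lower ones as polynomials in `ν` and `b` times `E_{ν+2} b`; its next two instances,
the positivity of `E_{ν+5} b` and `E_{ν+6} b`, bound `b` sharply enough for the resulting
polynomial inequality to hold for every real `ν ≥ 0`.
-/

/-- The Bessel function of the first kind `J_ν`, defined for real order `ν`
by its power series (interpreted with real powers `(x/2)^(2k+ν)`). -/
noncomputable def besselJ (ν x : ℝ) : ℝ :=
  ∑' k : ℕ, (-1 : ℝ) ^ k / (k.factorial * Real.Gamma ((k : ℝ) + ν + 1)) *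
    (x / 2) ^ (2 * (k : ℝ) + ν)

/-- `j_{ν,1}`: the smallest positive zero of the Bessel function `J_ν`. -/
noncomputable def besselJZero1 (ν : ℝ) : ℝ := sInf {r : ℝ | 0 < r ∧ besselJ ν r = 0}

open Finset Set
open scoped Nat

lemma le_mul_of_mul_le_sq {u : ℕ → ℝ} (hpos : ∀ k, 0 < u k)
    (h : ∀ k, u k * u (k + 2) ≤ u (k + 1) ^ 2) (k : ℕ) : u (k + 1) ≤ u 1 / u 0 * u k := by
  have hanti : Antitone fun k => u (k + 1) / u k := antitone_nat_of_succ_le fun k => by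
    rw [div_le_div_iff₀ (hpos _) (hpos _)]
    linarith [h k]
  exact (div_le_iff₀ (hpos k)).1 (hanti k.zero_le)

lemma pos_of_mul_add_mul_deriv_pos {f f' : ℝ → ℝ} {c z : ℝ} (hc : 0 < c) (hz : 0 < z)
    (hf : ContinuousOn f (Icc 0 z)) (hf' : ∀ x ∈ Ioo 0 z, HasDerivAt f (f' x) x)
    (h : ∀ x ∈ Ioo 0 z, 0 < c * f x + x * f' x) : 0 < f z := by
  have hmono : StrictMonoOn (fun x => x ^ c * f x) (Icc 0 z) := by
    refine strictMonoOn_of_deriv_pos (convex_Icc 0 z)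
      ((Real.continuous_rpow_const hc.le).continuousOn.mul hf) fun x hx => ?_
    rw [interior_Icc] at hx
    have hderiv : HasDerivAt (fun x => x ^ c * f x) (x ^ (c - 1) * (c * f x + x * f' x)) x := by
      refine ((Real.hasDerivAt_rpow_const (Or.inl hx.1.ne')).mul (hf' x hx)).congr_deriv ?_
      rw [Real.rpow_sub_one hx.1.ne']
      have hx0 := hx.1.ne'
      field_simp
    rw [hderiv.deriv]
    exact mul_pos (Real.rpow_pos_of_pos hx.1 _) (h x hx)
  have hlt := hmono (left_mem_Icc.2 hz.le) (right_mem_Icc.2 hz.le) hz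
  simp only [Real.zero_rpow hc.ne', zero_mul] at hlt
  exact pos_of_mul_pos_right hlt (Real.rpow_nonneg hz.le c)

lemma nonneg_of_mul_add_mul_deriv_nonneg {f f' : ℝ → ℝ} {c z : ℝ} (hc : 0 < c) (hz : 0 < z)
    (hf : ContinuousOn f (Icc 0 z)) (hf' : ∀ x ∈ Ioo 0 z, HasDerivAt f (f' x) x)
    (h : ∀ x ∈ Ioo 0 z, 0 ≤ c * f x + x * f' x) : 0 ≤ f z := by
  refine le_of_forall_pos_le_add fun ε hε => le_of_lt ?_
  refine pos_of_mul_add_mul_deriv_pos (f := fun x => f x + ε) hc hz (hf.add continuousOn_const)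
    (fun x hx => (hf' x hx).add_const ε) fun x hx => ?_
  linarith [h x hx, mul_pos hc hε]

lemma exists_eq_zero_forall_Ico_pos {f : ℝ → ℝ} {a b : ℝ} (hab : a ≤ b)
    (hf : ContinuousOn f (Icc a b)) (ha : 0 < f a) (hb : f b ≤ 0) :
    ∃ c ∈ Ioc a b, f c = 0 ∧ ∀ x ∈ Ico a c, 0 < f x := by
  have hzero {x : ℝ} (hx : x ∈ Icc a b) (hfx : f x ≤ 0) : ∃ y ∈ Icc a x, f y = 0 :=
    intermediate_value_Icc' hx.1 (hf.mono (Icc_subset_Icc_right hx.2)) ⟨hfx, ha.le⟩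
  obtain ⟨c, ⟨hc, hfc⟩, hmin⟩ : ∃ c, IsLeast (Icc a b ∩ f ⁻¹' {0}) c :=
    (isCompact_Icc.of_isClosed_subset (hf.preimage_isClosed_of_isClosed isClosed_Icc
      isClosed_singleton) inter_subset_left).exists_isLeast (hzero (right_mem_Icc.2 hab) hb)
  refine ⟨c, ⟨hc.1.lt_of_ne ?_, hc.2⟩, hfc, fun x hx => ?_⟩
  · rintro rfl
    exact ha.ne' hfc
  · by_contra! hfx
    have hxb := hx.2.le.trans hc.2
    obtain ⟨y, hy, hfy⟩ := hzero ⟨hx.1, hxb⟩ hfx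
    exact (hmin ⟨⟨hy.1, hy.2.trans hxb⟩, hfy⟩).not_gt (hy.2.trans_lt hx.2)

lemma inv_Gamma_eq_mul_inv_Gamma_add_one (s : ℝ) :
    (Real.Gamma s)⁻¹ = s * (Real.Gamma (s + 1))⁻¹ := by
  rcases eq_or_ne s 0 with rfl | hs
  · simp
  · rw [Real.Gamma_add_one hs, mul_inv, mul_inv_cancel_left₀ hs]

lemma exists_abs_inv_Gamma_natCast_add_le (a : ℝ) :
    ∃ C, ∀ k : ℕ, |(Real.Gamma (k + a))⁻¹| ≤ C := by
  have hev : ∀ᶠ k : ℕ in Filter.atTop, |(Real.Gamma (k + a))⁻¹| ≤ 1 := by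
    filter_upwards [tendsto_natCast_atTop_atTop.eventually_ge_atTop (2 - a)] with k hk
    have hk : 2 ≤ k + a := by linarith
    have hΓ : 1 ≤ Real.Gamma (k + a) := by
      rw [← Real.Gamma_two]
      exact Real.Gamma_strictMonoOn_Ici.monotoneOn self_mem_Ici hk hk
    rw [abs_of_pos (by positivity)]
    exact inv_le_one_of_one_le₀ hΓ
  obtain ⟨C, hC⟩ := (Filter.isBoundedUnder_of_eventually_le hev).bddAbove_range
  exact ⟨C, fun k => hC (mem_range_self k)⟩

lemma nine_mul_mul_sub_le_of_quadratic_pos {m b : ℝ} (hm : 2 ≤ m)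
    (hquad : 0 < m * (m + 1) * (m + 2) * (m + 3) - 3 * (m + 1) * (m + 2) * b + b ^ 2)
    (hb : (5 * m + 6) * b < 2 * m * (m + 1) * (m + 3)) :
    9 * b * (99 * m ^ 2 + 103 * m + 20 - 15 * b) ≤ 8 * (7 * m + 5) * (2 * m + 1) ^ 3 := by
  -- `-135 * b ^ 2` is bounded by a linear function of `b` through `hquad`.
  suffices hlin : (486 * m ^ 2 - 288 * m - 630) * b + 135 * m * (m + 1) * (m + 2) * (m + 3) ≤
      8 * (7 * m + 5) * (2 * m + 1) ^ 3 by linarith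
  refine le_of_mul_le_mul_left (a := 5 * m + 6) ?_ (by linarith)
  have hcoeff : 0 ≤ 486 * m ^ 2 - 288 * m - 630 := by nlinarith
  have hmul := mul_le_mul_of_nonneg_left hb.le hcoeff
  suffices 0 ≤ (5 * m + 6) * (8 * (7 * m + 5) * (2 * m + 1) ^ 3 -
      135 * m * (m + 1) * (m + 2) * (m + 3)) -
      (486 * m ^ 2 - 288 * m - 630) * (2 * m * (m + 1) * (m + 3)) by linarith
  obtain ⟨t, ht, rfl⟩ : ∃ t ≥ 0, m = 2 + t := ⟨m - 2, by linarith, by ring⟩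
  ring_nf
  positivity

/-- The left-hand side is the weight of the second, third and fourth order terms in the Taylor
bound `besselEntire.IsFirstZero.apply_sub_mul_le` at the first zero `b` of order `m - 1`. -/
lemma mul_taylor_weight_le_one {m b s : ℝ} (hm : 2 ≤ m) (hs : s = 3 / (2 * m + 1))
    (hquad : 0 < m * (m + 1) * (m + 2) * (m + 3) - 3 * (m + 1) * (m + 2) * b + b ^ 2)
    (hb : (5 * m + 6) * b < 2 * m * (m + 1) * (m + 3)) :
    b * (s ^ 2 / 2 + s ^ 3 * m / 6 + s ^ 4 * (m * (m + 1) - b) / (24 * (1 - s * m / 5))) ≤ 1 := by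
  have hdenom : 1 - s * m / 5 = (7 * m + 5) / (5 * (2 * m + 1)) := by
    rw [hs]
    field_simp
    ring
  calc b * (s ^ 2 / 2 + s ^ 3 * m / 6 + s ^ 4 * (m * (m + 1) - b) / (24 * (1 - s * m / 5)))
      = 9 * b * (99 * m ^ 2 + 103 * m + 20 - 15 * b) / (8 * (7 * m + 5) * (2 * m + 1) ^ 3) := by
        rw [hdenom, hs]
        field_simp
        ring
    _ ≤ 1 := (div_le_one (by positivity)).2 (nine_mul_mul_sub_le_of_quadratic_pos hm hquad hb)

/-- The entire function for which `J_ν x = (x / 2) ^ ν * besselEntire ν (x ^ 2 / 4)`; it carries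
the positive zeros of `J_ν` without the branch point of the power at the origin. Up to the sign
of the argument it is the Bessel–Clifford function. -/
noncomputable def besselEntire (ν z : ℝ) : ℝ :=
  ∑' k : ℕ, (-1 : ℝ) ^ k / (k ! * Real.Gamma (k + ν + 1)) * z ^ k

namespace besselEntire

variable {ν z : ℝ}

lemma summable_series (ν z : ℝ) :
    Summable fun k : ℕ => (-1 : ℝ) ^ k / (k ! * Real.Gamma (k + ν + 1)) * z ^ k := by
  obtain ⟨C, hC⟩ := exists_abs_inv_Gamma_natCast_add_le (ν + 1)
  refine .of_norm_bounded ((Real.summable_pow_div_factorial |z|).mul_left C) fun k => ?_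
  calc ‖(-1 : ℝ) ^ k / (k ! * Real.Gamma (k + ν + 1)) * z ^ k‖
      = |(Real.Gamma (k + (ν + 1)))⁻¹| * (|z| ^ k / k !) := by
        simp only [norm_mul, norm_div, norm_pow, norm_neg, norm_one, one_pow, RCLike.norm_natCast,
          Real.norm_eq_abs, one_div, mul_inv_rev, ← add_assoc, abs_inv]
        ring
    _ ≤ C * (|z| ^ k / k !) := by gcongr; exact hC k

lemma summable_double_series (ν z w : ℝ) : Summable fun p : ℕ × ℕ =>
    (-w) ^ p.1 / p.1 ! *
      ((-1 : ℝ) ^ p.2 / (p.2 ! * Real.Gamma (p.2 + (ν + p.1) + 1)) * z ^ p.2) := by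
  obtain ⟨C, hC⟩ := exists_abs_inv_Gamma_natCast_add_le (ν + 1)
  have hexp := (Real.summable_pow_div_factorial |w|).mul_of_nonneg
    (Real.summable_pow_div_factorial |z|) (fun k => by positivity) fun k => by positivity
  refine .of_norm_bounded (hexp.mul_left C) fun ⟨i, j⟩ => ?_
  have hij : (j : ℝ) + (ν + i) + 1 = ((i + j : ℕ) : ℝ) + (ν + 1) := by push_cast; ring
  simp only [hij]
  calc ‖(-w) ^ i / i ! * ((-1 : ℝ) ^ j / (j ! * Real.Gamma ((i + j : ℕ) + (ν + 1))) * z ^ j)‖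
      = |(Real.Gamma ((i + j : ℕ) + (ν + 1)))⁻¹| * (|w| ^ i / i ! * (|z| ^ j / j !)) := by
        simp only [norm_mul, norm_div, norm_pow, norm_neg, norm_one, one_pow, RCLike.norm_natCast,
          Real.norm_eq_abs, one_div, mul_inv_rev, abs_inv]
        ring
    _ ≤ C * (|w| ^ i / i ! * (|z| ^ j / j !)) := by gcongr; exact hC _

lemma sum_antidiagonal_double_series (ν z w : ℝ) (n : ℕ) :
    ∑ p ∈ antidiagonal n, (-w) ^ p.1 / p.1 ! *
      ((-1 : ℝ) ^ p.2 / (p.2 ! * Real.Gamma (p.2 + (ν + p.1) + 1)) * z ^ p.2) =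
    (-1 : ℝ) ^ n / (n ! * Real.Gamma (n + ν + 1)) * (z + w) ^ n := by
  rw [add_comm z w, (Commute.all w z).add_pow', mul_sum]
  refine sum_congr rfl fun p hp => ?_
  obtain rfl := mem_antidiagonal.1 hp
  have hΓ : (p.2 : ℝ) + (ν + p.1) + 1 = (p.1 + p.2 : ℕ) + ν + 1 := by push_cast; ring
  rw [hΓ, nsmul_eq_mul, Nat.cast_add_choose, neg_pow, pow_add]
  field_simp

/-- In terms of `J_ν` this is Lommel's multiplication theorem. -/
theorem hasSum_add (ν z w : ℝ) :
    HasSum (fun k : ℕ => (-w) ^ k / k ! * besselEntire (ν + k) z) (besselEntire ν (z + w)) := by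
  have hsum := summable_double_series ν z w
  have hdiag := (HasAntidiagonal.sigmaAntidiagonalEquivProd.hasSum_iff.2 hsum.hasSum).sigma
    fun n => hasSum_fintype _
  have htsum : besselEntire ν (z + w) = ∑' p : ℕ × ℕ, (-w) ^ p.1 / p.1 ! *
      ((-1 : ℝ) ^ p.2 / (p.2 ! * Real.Gamma (p.2 + (ν + p.1) + 1)) * z ^ p.2) := by
    refine Eq.trans (tsum_congr fun n => ?_) hdiag.tsum_eq
    rw [← sum_antidiagonal_double_series]
    exact (sum_coe_sort (antidiagonal n) _).symm
  rw [htsum]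
  refine hsum.hasSum.prod_fiberwise fun k => ?_
  exact (summable_series (ν + k) z).hasSum.mul_left _

lemma hasDerivAt (ν z : ℝ) : HasDerivAt (besselEntire ν) (-besselEntire (ν + 1) z) z := by
  have hseries : HasFPowerSeriesAt (besselEntire ν)
      (.ofScalars ℝ fun k : ℕ => (-1) ^ k / k ! * besselEntire (ν + k) z) z := by
    refine hasFPowerSeriesAt_iff.2 (.of_forall fun w => ?_)
    refine (hasSum_add ν z w).congr_fun fun k => ?_
    rw [FormalMultilinearSeries.coeff_ofScalars, smul_eq_mul, neg_pow]
    ring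
  simpa using hseries.hasDerivAt

lemma continuous (ν : ℝ) : Continuous (besselEntire ν) :=
  continuous_iff_continuousAt.2 fun z => (hasDerivAt ν z).continuousAt

lemma recurrence (ν z : ℝ) :
    besselEntire ν z = (ν + 1) * besselEntire (ν + 1) z - z * besselEntire (ν + 2) z := by
  have hshift : HasSum
      (fun k : ℕ => k * ((-1 : ℝ) ^ k / (k ! * Real.Gamma (k + (ν + 1) + 1)) * z ^ k))
      (-(z * besselEntire (ν + 2) z)) := by
    rw [← hasSum_nat_add_iff' 1]
    simp only [range_one, sum_singleton, Nat.cast_zero, zero_mul, sub_zero]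
    refine ((summable_series (ν + 2) z).hasSum.mul_left z).neg.congr_fun fun k => ?_
    have hΓ : ((k + 1 : ℕ) : ℝ) + (ν + 1) + 1 = k + (ν + 2) + 1 := by push_cast; ring
    rw [hΓ, Nat.factorial_succ, pow_succ, pow_succ]
    push_cast
    field_simp
  have hseries : HasSum
      (fun k : ℕ => (-1 : ℝ) ^ k / (k ! * Real.Gamma (k + (ν + 1) + 1)) * z ^ k)
      (besselEntire (ν + 1) z) := (summable_series (ν + 1) z).hasSum
  rw [sub_eq_add_neg, ← ((hseries.mul_left (ν + 1)).add hshift).tsum_eq, besselEntire]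
  refine tsum_congr fun k => ?_
  rw [← add_assoc, div_eq_mul_inv, mul_inv, inv_Gamma_eq_mul_inv_Gamma_add_one]
  ring

lemma apply_zero (ν : ℝ) : besselEntire ν 0 = (Real.Gamma (ν + 1))⁻¹ := by
  rw [besselEntire, tsum_eq_single 0 fun k hk => by simp [hk]]
  simp

lemma apply_zero_pos (hν : -1 < ν) : 0 < besselEntire ν 0 := by
  rw [apply_zero]
  exact inv_pos.2 (Real.Gamma_pos_of_pos (by linarith))

lemma add_one_pos (hν : -1 < ν) (hz : 0 < z) (hpos : ∀ x ∈ Ioo 0 z, 0 < besselEntire ν x) :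
    0 < besselEntire (ν + 1) z := by
  refine pos_of_mul_add_mul_deriv_pos (c := ν + 1) (by linarith) hz
    (continuous _).continuousOn (fun x _ => hasDerivAt _ x) fun x hx => ?_
  rw [add_assoc ν, one_add_one_eq_two]
  linarith [hpos x hx, recurrence ν x]

lemma add_natCast_pos (hν : -1 < ν) (hz : 0 < z) (hpos : ∀ x ∈ Ioo 0 z, 0 < besselEntire ν x)
    {k : ℕ} (hk : 0 < k) : 0 < besselEntire (ν + k) z := by
  induction k, hk using Nat.le_induction generalizing z with
  | base => simpa using add_one_pos hν hz hpos
  | succ k _ ih =>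
    push_cast
    rw [← add_assoc]
    refine add_one_pos (by linarith [k.cast_nonneg (α := ℝ)]) hz fun x hx => ?_
    exact ih hx.1 fun y hy => hpos y ⟨hy.1, hy.2.trans hx.2⟩

theorem turan (hν : -1 < ν) (hz : 0 < z) :
    besselEntire ν z * besselEntire (ν + 2) z ≤ besselEntire (ν + 1) z ^ 2 := by
  rw [← sub_nonneg]
  refine nonneg_of_mul_add_mul_deriv_nonneg
    (f := fun x => besselEntire (ν + 1) x ^ 2 - besselEntire ν x * besselEntire (ν + 2) x)
    (c := ν + 2) (by linarith) hz ?_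
    (fun x _ => ((hasDerivAt (ν + 1) x).pow 2).sub
      ((hasDerivAt ν x).mul (hasDerivAt (ν + 2) x))) fun x _ => ?_
  · have h0 := continuous ν
    have h1 := continuous (ν + 1)
    have h2 := continuous (ν + 2)
    exact Continuous.continuousOn (by fun_prop)
  · have h0 := recurrence ν x
    have h1 : besselEntire (ν + 1) x =
        (ν + 2) * besselEntire (ν + 2) x - x * besselEntire (ν + 3) x := by
      norm_num [add_assoc, recurrence (ν + 1) x]
    have htwo : ν + 1 + 1 = ν + 2 := by ring
    have hthree : ν + 2 + 1 = ν + 3 := by ring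
    rw [htwo, hthree]
    refine (sq_nonneg (besselEntire (ν + 1) x)).trans_eq ?_
    push_cast
    linear_combination besselEntire (ν + 1) x * h0 - besselEntire ν x * h1

lemma apply_natCast_add_le {ρ : ℝ} {n : ℕ} (hρ : 0 ≤ ρ)
    (hratio : ∀ k, n ≤ k → besselEntire (ν + (k + 1 : ℕ)) z ≤ ρ * besselEntire (ν + k) z)
    (j : ℕ) : besselEntire (ν + (n + j : ℕ)) z ≤ ρ ^ j * besselEntire (ν + n) z := by
  induction j with
  | zero => simp
  | succ j ih =>
    calc besselEntire (ν + (n + j + 1 : ℕ)) z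
        ≤ ρ * besselEntire (ν + (n + j : ℕ)) z := hratio _ (Nat.le_add_right n j)
      _ ≤ ρ * (ρ ^ j * besselEntire (ν + n) z) := by gcongr
      _ = ρ ^ (j + 1) * besselEntire (ν + n) z := by ring

theorem apply_sub_le {h ρ : ℝ} {n : ℕ} (hh : 0 ≤ h) (hρ : 0 ≤ ρ) (hhρ : h * ρ < n + 1)
    (hn : 0 ≤ besselEntire (ν + n) z)
    (hratio : ∀ k, n ≤ k → besselEntire (ν + (k + 1 : ℕ)) z ≤ ρ * besselEntire (ν + k) z) :
    besselEntire ν (z - h) ≤ ∑ k ∈ range n, h ^ k / k ! * besselEntire (ν + k) z +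
      h ^ n / n ! * besselEntire (ν + n) z / (1 - h * ρ / (n + 1)) := by
  have htaylor := hasSum_add ν z (-h)
  rw [neg_neg, ← sub_eq_add_neg, ← hasSum_nat_add_iff' n] at htaylor
  have hgeom : HasSum
      (fun j => h ^ n / n ! * besselEntire (ν + n) z * (h * ρ / (n + 1)) ^ j)
      (h ^ n / n ! * besselEntire (ν + n) z / (1 - h * ρ / (n + 1))) := by
    rw [div_eq_mul_inv (_ * _)]
    exact (hasSum_geometric_of_lt_one (by positivity)
      ((div_lt_one (by positivity)).2 hhρ)).mul_left _
  refine sub_le_iff_le_add'.1 (hasSum_le (fun j => ?_) htaylor hgeom)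
  have hfactorial : (n ! * (n + 1) ^ j : ℝ) ≤ (n + j)! := by
    exact_mod_cast Nat.factorial_mul_pow_le_factorial
  calc h ^ (j + n) / (j + n)! * besselEntire (ν + (j + n : ℕ)) z
      ≤ h ^ (n + j) / (n + j)! * (ρ ^ j * besselEntire (ν + n) z) := by
        rw [add_comm j n]
        gcongr
        exact apply_natCast_add_le hρ hratio j
    _ ≤ h ^ (n + j) / (n ! * (n + 1) ^ j) * (ρ ^ j * besselEntire (ν + n) z) := by gcongr
    _ = h ^ n / n ! * besselEntire (ν + n) z * (h * ρ / (n + 1)) ^ j := by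
        rw [div_pow, mul_pow, pow_add]
        field_simp

/-- `b` is the smallest positive zero of `besselEntire ν`, which is positive before it. -/
structure IsFirstZero (ν b : ℝ) : Prop where
  pos : 0 < b
  apply_eq_zero : besselEntire ν b = 0
  apply_pos : ∀ x ∈ Ioo 0 b, 0 < besselEntire ν x

lemma exists_isFirstZero_le (hν : -1 < ν) (hz : 0 < z) (hnonpos : besselEntire ν z ≤ 0) :
    ∃ b ≤ z, IsFirstZero ν b := by
  obtain ⟨b, hb, hzero, hpos⟩ := exists_eq_zero_forall_Ico_pos hz.le
    (continuous ν).continuousOn (apply_zero_pos hν) hnonpos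
  exact ⟨b, hb.2, hb.1, hzero, fun x hx => hpos x ⟨hx.1.le, hx.2⟩⟩

lemma exists_nonpos (hν : -1 < ν) : ∃ z > 0, besselEntire ν z ≤ 0 := by
  by_contra! hpos
  set z := (ν + 1) * (ν + 2) with hz_def
  have hz : 0 < z := mul_pos (by linarith) (by linarith)
  have h3 : 0 < besselEntire (ν + 3) z := by
    exact_mod_cast add_natCast_pos hν hz (fun x hx => hpos x hx.1) (k := 3) (by norm_num)
  have hrec0 := recurrence ν z
  have hrec1 : besselEntire (ν + 1) z =
      (ν + 2) * besselEntire (ν + 2) z - z * besselEntire (ν + 3) z := by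
    norm_num [add_assoc, recurrence (ν + 1) z]
  have hlt : besselEntire ν z < 0 := by
    calc besselEntire ν z = -((ν + 1) * (z * besselEntire (ν + 3) z)) := by
          rw [hrec0, hrec1, hz_def]
          ring
      _ < 0 := neg_lt_zero.2 (mul_pos (by linarith) (mul_pos hz h3))
  exact hlt.not_gt (hpos z hz)

lemma exists_isFirstZero (hν : -1 < ν) : ∃ b, IsFirstZero ν b := by
  obtain ⟨z, hz, hnonpos⟩ := exists_nonpos hν
  obtain ⟨b, -, hb⟩ := exists_isFirstZero_le hν hz hnonpos
  exact ⟨b, hb⟩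

namespace IsFirstZero

variable {b : ℝ}

lemma apply_add_natCast_pos (hb : IsFirstZero ν b) (hν : -1 < ν) {k : ℕ} (hk : 0 < k) :
    0 < besselEntire (ν + k) b :=
  add_natCast_pos hν hb.pos hb.apply_pos hk

lemma apply_eq_neg_mul (hb : IsFirstZero (ν + 1) b) :
    besselEntire ν b = -(b * besselEntire (ν + 2) b) := by
  rw [recurrence, hb.apply_eq_zero, mul_zero, zero_sub]

lemma mul_apply_add_two (hb : IsFirstZero ν b) :
    b * besselEntire (ν + 2) b = (ν + 1) * besselEntire (ν + 1) b := by
  linarith [recurrence ν b, hb.apply_eq_zero]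

lemma sq_mul_apply_add_three (hb : IsFirstZero ν b) :
    b ^ 2 * besselEntire (ν + 3) b = ((ν + 1) * (ν + 2) - b) * besselEntire (ν + 1) b := by
  have hrec : besselEntire (ν + 1) b =
      (ν + 2) * besselEntire (ν + 2) b - b * besselEntire (ν + 3) b := by
    norm_num [add_assoc, recurrence (ν + 1) b]
  linear_combination (ν + 2) * hb.mul_apply_add_two + b * hrec

lemma pow_three_mul_apply_add_four (hb : IsFirstZero ν b) :
    b ^ 3 * besselEntire (ν + 4) b =
      (ν + 2) * ((ν + 1) * (ν + 3) - 2 * b) * besselEntire (ν + 1) b := by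
  have hrec : besselEntire (ν + 2) b =
      (ν + 3) * besselEntire (ν + 3) b - b * besselEntire (ν + 4) b := by
    norm_num [add_assoc, recurrence (ν + 2) b]
  linear_combination (ν + 3) * hb.sq_mul_apply_add_three - b * hb.mul_apply_add_two + b ^ 2 * hrec

lemma pow_four_mul_apply_add_five (hb : IsFirstZero ν b) :
    b ^ 4 * besselEntire (ν + 5) b =
      ((ν + 1) * (ν + 2) * (ν + 3) * (ν + 4) - 3 * (ν + 2) * (ν + 3) * b + b ^ 2) *
        besselEntire (ν + 1) b := by
  have hrec : besselEntire (ν + 3) b =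
      (ν + 4) * besselEntire (ν + 4) b - b * besselEntire (ν + 5) b := by
    norm_num [add_assoc, recurrence (ν + 3) b]
  linear_combination (ν + 4) * hb.pow_three_mul_apply_add_four - b * hb.sq_mul_apply_add_three +
    b ^ 3 * hrec

lemma two_mul_lt (hb : IsFirstZero ν b) (hν : -1 < ν) : 2 * b < (ν + 1) * (ν + 3) := by
  have h1 := hb.apply_add_natCast_pos hν one_pos
  have h4 := mul_pos (pow_pos hb.pos 3) (hb.apply_add_natCast_pos hν (k := 4) (by norm_num))
  push_cast at h1 h4
  rw [hb.pow_three_mul_apply_add_four] at h4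
  have hfactor := pos_of_mul_pos_right (pos_of_mul_pos_left h4 h1.le) (by linarith)
  linarith

lemma quadratic_pos (hb : IsFirstZero ν b) (hν : -1 < ν) :
    0 < (ν + 1) * (ν + 2) * (ν + 3) * (ν + 4) - 3 * (ν + 2) * (ν + 3) * b + b ^ 2 := by
  have h1 := hb.apply_add_natCast_pos hν one_pos
  have h5 := mul_pos (pow_pos hb.pos 4) (hb.apply_add_natCast_pos hν (k := 5) (by norm_num))
  push_cast at h1 h5
  rw [hb.pow_four_mul_apply_add_five] at h5
  exact pos_of_mul_pos_left h5 h1.le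

lemma five_mul_add_eleven_mul_lt (hb : IsFirstZero ν b) (hν : -1 < ν) :
    (5 * ν + 11) * b < 2 * (ν + 1) * (ν + 2) * (ν + 4) := by
  have hlt := hb.two_mul_lt hν
  have hquad := hb.quadratic_pos hν
  have hsq : b * (2 * b) < b * ((ν + 1) * (ν + 3)) := mul_lt_mul_of_pos_left hlt hb.pos
  refine lt_of_mul_lt_mul_left (a := ν + 3) ?_ (by linarith)
  linarith

lemma apply_natCast_succ_le (hb : IsFirstZero ν b) (hν : -1 < ν) (k : ℕ) :
    besselEntire (ν + 1 + (k + 1 : ℕ)) b ≤ (ν + 1) / b * besselEntire (ν + 1 + k) b := by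
  have hpos (j : ℕ) : 0 < besselEntire (ν + 1 + j) b := by
    have h := hb.apply_add_natCast_pos hν j.succ_pos
    rwa [Nat.cast_succ, add_comm (j : ℝ), ← add_assoc] at h
  have hratio := le_mul_of_mul_le_sq hpos fun j => by
    simpa [add_assoc] using
      turan (ν := ν + 1 + j) (by linarith [j.cast_nonneg (α := ℝ)]) hb.pos
  have hone : besselEntire (ν + 1) b ≠ 0 := by simpa using (hpos 0).ne'
  have hquot : besselEntire (ν + 1 + (1 : ℕ)) b / besselEntire (ν + 1 + (0 : ℕ)) b =
      (ν + 1) / b := by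
    rw [Nat.cast_one, Nat.cast_zero, add_zero, add_assoc, one_add_one_eq_two,
      div_eq_div_iff hone hb.pos.ne', ← hb.mul_apply_add_two, mul_comm]
  exact hquot ▸ hratio k

lemma apply_sub_mul_le (hb : IsFirstZero (ν + 1) b) (hν : -2 < ν) {s : ℝ} (hs : 0 ≤ s)
    (hs5 : s * (ν + 2) < 5) :
    besselEntire ν (b - s * b) ≤ -(b * besselEntire (ν + 2) b *
      (1 - b * (s ^ 2 / 2 + s ^ 3 * (ν + 2) / 6 +
        s ^ 4 * ((ν + 2) * (ν + 2 + 1) - b) / (24 * (1 - s * (ν + 2) / 5))))) := by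
  have hb0 := hb.pos
  have hratio (k : ℕ) (hk : 4 ≤ k) :
      besselEntire (ν + (k + 1 : ℕ)) b ≤ (ν + 2) / b * besselEntire (ν + k) b := by
    obtain ⟨j, rfl⟩ := Nat.exists_eq_add_of_le (Nat.le_of_add_left_le hk : 2 ≤ k)
    have hindex (i : ℕ) : ν + 1 + 1 + i = ν + (2 + i : ℕ) := by push_cast; ring
    have h := hb.apply_natCast_succ_le (by linarith) j
    rwa [hindex, hindex, add_assoc ν, one_add_one_eq_two] at h
  have hE4_nonneg : 0 ≤ besselEntire (ν + (4 : ℕ)) b := by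
    have hindex : ν + (4 : ℕ) = ν + 1 + (3 : ℕ) := by push_cast; ring
    rw [hindex]
    exact (hb.apply_add_natCast_pos (by linarith) (by norm_num)).le
  have hsρ : s * b * ((ν + 2) / b) = s * (ν + 2) := by field_simp
  have hE3 : b * besselEntire (ν + 3) b = (ν + 2) * besselEntire (ν + 2) b := by
    have h := hb.mul_apply_add_two
    ring_nf at h ⊢
    exact h
  have hE4 : b ^ 2 * besselEntire (ν + 4) b =
      ((ν + 2) * (ν + 2 + 1) - b) * besselEntire (ν + 2) b := by
    have h := hb.sq_mul_apply_add_three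
    ring_nf at h ⊢
    exact h
  calc besselEntire ν (b - s * b)
      ≤ _ := apply_sub_le (h := s * b) (n := 4) (by positivity) (div_nonneg (by linarith) hb0.le)
        (by rw [hsρ]; push_cast; linarith) hE4_nonneg hratio
    _ = besselEntire ν b + (s * b) ^ 2 / 2 * besselEntire (ν + 2) b +
          (s * b) ^ 3 / 6 * besselEntire (ν + 3) b +
          (s * b) ^ 4 / 24 * besselEntire (ν + 4) b / (1 - s * (ν + 2) / 5) := by
        rw [hsρ]
        norm_num [sum_range_succ, Nat.factorial, hb.apply_eq_zero]
    _ = _ := by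
        generalize 1 - s * (ν + 2) / 5 = D
        linear_combination hb.apply_eq_neg_mul + s ^ 3 * b ^ 2 / 6 * hE3 +
          s ^ 4 * b ^ 2 / (24 * D) * hE4

theorem apply_mul_nonpos (hb : IsFirstZero (ν + 1) b) (hν : 0 ≤ ν) :
    besselEntire ν (2 * (ν + 1) / (2 * ν + 5) * b) ≤ 0 := by
  have hE2 := hb.apply_add_natCast_pos (by linarith) one_pos
  rw [Nat.cast_one, add_assoc, one_add_one_eq_two] at hE2
  have hweight := mul_taylor_weight_le_one (m := ν + 2) (b := b) (by linarith) rfl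
    (by linarith [hb.quadratic_pos (by linarith)])
    (by linarith [hb.five_mul_add_eleven_mul_lt (by linarith)])
  have hlt : 3 / (2 * (ν + 2) + 1) * (ν + 2) < 5 := by
    field_simp
    linarith
  calc besselEntire ν (2 * (ν + 1) / (2 * ν + 5) * b)
      = besselEntire ν (b - 3 / (2 * (ν + 2) + 1) * b) := by
        congr 1
        field_simp
        ring
    _ ≤ _ := hb.apply_sub_mul_le (by linarith) (by positivity) hlt
    _ ≤ 0 := neg_nonpos.2 (mul_nonneg (mul_pos hb.pos hE2).le (sub_nonneg.2 hweight))

end IsFirstZero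

end besselEntire

open besselEntire

lemma besselJ_eq_rpow_mul_besselEntire (ν : ℝ) {x : ℝ} (hx : 0 < x) :
    besselJ ν x = (x / 2) ^ ν * besselEntire ν (x ^ 2 / 4) := by
  rw [besselJ, besselEntire, ← tsum_mul_left]
  refine tsum_congr fun k => ?_
  have hpow : (x / 2) ^ (2 * (k : ℝ) + ν) = (x / 2) ^ ν * (x ^ 2 / 4) ^ k := by
    have hsq : (x / 2) ^ 2 = x ^ 2 / 4 := by ring
    rw [Real.rpow_add (half_pos hx), Real.rpow_mul (half_pos hx).le, Real.rpow_two,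
      Real.rpow_natCast, hsq, mul_comm]
  rw [hpow]
  ring

lemma besselJ_eq_zero_iff (ν : ℝ) {x : ℝ} (hx : 0 < x) :
    besselJ ν x = 0 ↔ besselEntire ν (x ^ 2 / 4) = 0 := by
  rw [besselJ_eq_rpow_mul_besselEntire ν hx, mul_eq_zero_iff_left]
  exact (Real.rpow_pos_of_pos (half_pos hx) ν).ne'

lemma besselJZero1_sq_eq {ν b : ℝ} (hb : IsFirstZero ν b) : besselJZero1 ν ^ 2 = 4 * b := by
  have hsq : (2 * √b) ^ 2 = 4 * b := by
    rw [mul_pow, Real.sq_sqrt hb.pos.le]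
    norm_num
  have hpos : 0 < 2 * √b := mul_pos two_pos (Real.sqrt_pos.2 hb.pos)
  have hleast : IsLeast {r : ℝ | 0 < r ∧ besselJ ν r = 0} (2 * √b) := by
    refine ⟨⟨hpos, ?_⟩, fun r hr => ?_⟩
    · rw [besselJ_eq_zero_iff ν hpos, hsq, mul_div_cancel_left₀ b four_ne_zero]
      exact hb.apply_eq_zero
    · by_contra! hlt
      have hr2 := pow_lt_pow_left₀ hlt hr.1.le two_ne_zero
      refine (hb.apply_pos (r ^ 2 / 4) ⟨by have := hr.1; positivity, by linarith⟩).ne' ?_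
      exact (besselJ_eq_zero_iff ν hr.1).1 hr.2
  rw [besselJZero1, hleast.csInf_eq, hsq]

theorem besselJZero1_quotient_bound_general (d : ℝ) (hd : 2 ≤ d) :
    besselJZero1 (d / 2 - 1) ^ 2 ≤ d / (d + 3) * besselJZero1 (d / 2) ^ 2 := by
  obtain ⟨ν, hν, rfl⟩ : ∃ ν : ℝ, 0 ≤ ν ∧ d = 2 * (ν + 1) := ⟨d / 2 - 1, by linarith, by ring⟩
  obtain ⟨b, hb⟩ := exists_isFirstZero (ν := ν + 1) (by linarith)
  obtain ⟨a, hab, ha⟩ := exists_isFirstZero_le (by linarith)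
    (mul_pos (by positivity) hb.pos) (hb.apply_mul_nonpos hν)
  rw [mul_div_cancel_left₀ (ν + 1) two_ne_zero, add_sub_cancel_right, besselJZero1_sq_eq ha,
    besselJZero1_sq_eq hb]
  calc 4 * a ≤ 4 * (2 * (ν + 1) / (2 * ν + 5) * b) := by gcongr
    _ = 2 * (ν + 1) / (2 * (ν + 1) + 3) * (4 * b) := by ring

theorem besselJZero1_quotient_bound (d : ℕ) (hd : 2 ≤ d) :
    besselJZero1 ((d : ℝ) / 2 - 1) ^ 2 ≤
      (d : ℝ) / ((d : ℝ) + 3) * besselJZero1 ((d : ℝ) / 2) ^ 2 :=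
  besselJZero1_quotient_bound_general d (by exact_mod_cast hd)
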